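/- Suppose ũ(T_t) is F_t-measurable and I_X = ∫_t^{t+Δ} e^{−κ_X(t+Δ−v)} dW_v, I_T = ∫_t^{t+Δ} e^{−κ_T(t+Δ−v)} dW_v are independent of F_t (W a Brownian motion with respect to a filtration containing F_t), λ, σ_T ∈ ℝ. Then E[ e^{λσ_T I_X} · 1_{I_T ≤ ũ(T_t)} | F_t ] = e^{λ²σ_T² k_X²/2} · Φ( ũ(T_t)/k_T − λσ_T k_{XT}²/k_T ), where k_X² = (1−e^{−2κ_XΔ})/(2κ_X), k_T² = (1−e^{−2κ_TΔ})/(2κ_T), k_{XT}² = (1−e^{−(κ_X+κ_T)Δ})/(κ_X+κ_T). -/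

import Mathlib

open MeasureTheory ProbabilityTheory Real

/-- The standard normal cumulative distribution function `Φ`. -/
noncomputable def stdNormalCDF (x : ℝ) : ℝ :=
  ((gaussianReal 0 1) (Set.Iic x)).toReal

/-- Freezing lemma: if `Z` is independent of `X`, then conditioning `f (X, Z)` on `X` amounts to
integrating out `Z` with `X` held fixed. -/
lemma condExp_comap_ae_eq_integral_map_of_indepFun {Ω β E : Type*} {mΩ : MeasurableSpace Ω}
    {mβ : MeasurableSpace β} [MeasurableSpace E] [StandardBorelSpace E] [Nonempty E]
    {μ : Measure Ω} [IsProbabilityMeasure μ] {X : Ω → β} {Z : Ω → E}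
    (hX : Measurable X) (hZ : Measurable Z) (hXZ : IndepFun X Z μ) {f : β × E → ℝ}
    (hf : StronglyMeasurable f) (hf_int : Integrable (fun ω => f (X ω, Z ω)) μ) :
    μ[fun ω => f (X ω, Z ω) | mβ.comap X] =ᵐ[μ] fun ω => ∫ z, f (X ω, z) ∂(μ.map Z) := by
  have : IsProbabilityMeasure (μ.map Z) := Measure.isProbabilityMeasure_map hZ.aemeasurable
  have hconst : condDistrib Z X μ =ᵐ[μ.map X] Kernel.const β (μ.map Z) := by
    refine condDistrib_ae_eq_of_measure_eq_compProd X hZ.aemeasurable ?_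
    rw [Measure.compProd_const]
    exact (indepFun_iff_map_prod_eq_prod_map_map hX.aemeasurable hZ.aemeasurable).1 hXZ
  filter_upwards [condExp_prod_ae_eq_integral_condDistrib hX hZ.aemeasurable hf hf_int,
    ae_of_ae_map hX.aemeasurable hconst] with ω h1 h2
  rw [h1, h2, Kernel.const_apply]

lemma gaussianPDFReal_zero_mul_exp {v : NNReal} (hv : v ≠ 0) (b x : ℝ) :
    gaussianPDFReal 0 v x * exp (b * x)
      = exp (v * b ^ 2 / 2) * gaussianPDFReal (b * v) v x := by
  have hv' : (v : ℝ) ≠ 0 := by exact_mod_cast hv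
  simp only [gaussianPDFReal]
  rw [mul_left_comm, mul_assoc, ← exp_add, ← exp_add]
  congr 2
  field_simp
  ring

lemma gaussianReal_real_Iic {v : NNReal} (hv : v ≠ 0) (m u : ℝ) :
    (gaussianReal m v).real (Set.Iic u) = stdNormalCDF ((u - m) / √v) := by
  have hv' : 0 < √(v : ℝ) := Real.sqrt_pos.2 (by exact_mod_cast pos_iff_ne_zero.2 hv)
  have hmap : (gaussianReal m v).map (fun x => (x - m) / √v) = gaussianReal 0 1 := by
    have : (fun x : ℝ => (x - m) / √v) = (fun x => x / √v) ∘ (fun x => x - m) := rfl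
    rw [this, ← Measure.map_map (by fun_prop) (by fun_prop), gaussianReal_map_sub_const,
      gaussianReal_map_div_const, sub_self, zero_div]
    congr 1
    ext
    simp [Real.sq_sqrt, hv]
  rw [stdNormalCDF, ← hmap, Measure.map_apply (by fun_prop) measurableSet_Iic, measureReal_def]
  congr 2
  ext x
  simp [div_le_div_iff_of_pos_right hv']

lemma integral_exp_mul_indicator_gaussianReal {v : NNReal} (hv : v ≠ 0) (b u : ℝ) :
    ∫ x, exp (b * x) * (if x ≤ u then (1 : ℝ) else 0) ∂(gaussianReal 0 v)
      = exp (v * b ^ 2 / 2) * stdNormalCDF ((u - b * v) / √v) := by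
  rw [integral_gaussianReal_eq_integral_smul hv, ← gaussianReal_real_Iic hv (b * v) u,
    ← integral_indicator_one measurableSet_Iic, integral_gaussianReal_eq_integral_smul hv,
    ← integral_const_mul]
  congr with x
  simp only [smul_eq_mul, Set.indicator_apply, Set.mem_Iic, Pi.one_apply]
  rw [← mul_assoc, gaussianPDFReal_zero_mul_exp hv, mul_assoc]

section CenteredGaussianPair

variable {Ω : Type*} {mΩ : MeasurableSpace Ω} {μ : Measure Ω} {X T : Ω → ℝ} {vX vT q : ℝ}

lemma hasGaussianLaw_of_map_linearCombination (hX : Measurable X) (hT : Measurable T)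
    {v : ℝ → ℝ → NNReal}
    (h : ∀ c d : ℝ, μ.map (fun ω => c * X ω + d * T ω) = gaussianReal 0 (v c d)) :
    HasGaussianLaw (fun ω => (X ω, T ω)) μ := by
  refine ⟨isGaussian_of_map_eq_gaussianReal fun L => ⟨0, v (L (1, 0)) (L (0, 1)), ?_⟩⟩
  rw [Measure.map_map (by fun_prop) (by fun_prop), ← h]
  congr 1
  ext ω
  have : (X ω, T ω) = X ω • ((1, 0) : ℝ × ℝ) + T ω • ((0, 1) : ℝ × ℝ) := by simp
  simp only [Function.comp_apply]
  rw [this, map_add, map_smul, map_smul]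
  simp [mul_comm]

lemma covariance_of_map_linearCombination [IsProbabilityMeasure μ]
    (hX : Measurable X) (hT : Measurable T)
    (hvX : 0 ≤ vX) (hvT : 0 ≤ vT) (hq : 0 ≤ q)
    (h : ∀ c d : ℝ, μ.map (fun ω => c * X ω + d * T ω)
      = gaussianReal 0 (c ^ 2 * vX + 2 * c * d * q + d ^ 2 * vT).toNNReal) :
    cov[X, T; μ] = q := by
  have hG := hasGaussianLaw_of_map_linearCombination hX hT h
  have hvar (c d : ℝ) (hcd : 0 ≤ c * d) :
      Var[fun ω => c * X ω + d * T ω; μ] = c ^ 2 * vX + 2 * c * d * q + d ^ 2 * vT := by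
    rw [← variance_id_map (by fun_prop), h, variance_id_gaussianReal, Real.coe_toNNReal]
    have := mul_nonneg hcd hq
    nlinarith [mul_nonneg (sq_nonneg c) hvX, mul_nonneg (sq_nonneg d) hvT]
  have h10 := hvar 1 0 (by simp)
  have h01 := hvar 0 1 (by simp)
  have h11 := hvar 1 1 (by simp)
  simp only [one_mul, zero_mul, add_zero, zero_add] at h10 h01 h11
  rw [variance_fun_add hG.fst.memLp_two hG.snd.memLp_two] at h11
  linarith

lemma integral_exp_mul_indicator_of_map_linearCombination [IsProbabilityMeasure μ]
    (hX : Measurable X) (hT : Measurable T)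
    (hvX : 0 ≤ vX) (hvT : 0 < vT) (hq : 0 ≤ q)
    (h : ∀ c d : ℝ, μ.map (fun ω => c * X ω + d * T ω)
      = gaussianReal 0 (c ^ 2 * vX + 2 * c * d * q + d ^ 2 * vT).toNNReal) (a u : ℝ) :
    ∫ ω, exp (a * X ω) * (if T ω ≤ u then (1 : ℝ) else 0) ∂μ
      = exp (a ^ 2 * vX / 2) * stdNormalCDF ((u - a * q) / √vT) := by
  have hG := hasGaussianLaw_of_map_linearCombination hX hT h
  have hcov := covariance_of_map_linearCombination hX hT hvX hvT.le hq h
  have hlawX : μ.map X = gaussianReal 0 vX.toNNReal := by simpa using h 1 0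
  have hlawT : μ.map T = gaussianReal 0 vT.toNNReal := by simpa using h 0 1
  have hvT' : vT.toNNReal ≠ 0 := by simpa using hvT
  have hvarT : Var[T; μ] = vT := by
    rw [← variance_id_map (by fun_prop), hlawT, variance_id_gaussianReal,
      Real.coe_toNNReal _ hvT.le]
  -- the residual of the regression of `X` on `T`
  set Y : Ω → ℝ := fun ω => X ω - q / vT * T ω with hY_def
  have hYm : Measurable Y := by fun_prop
  have hindep : IndepFun Y T μ := by
    refine HasGaussianLaw.indepFun_of_covariance_eq_zero ?_ ?_
    · let L : ℝ × ℝ →L[ℝ] ℝ × ℝ :=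
        (ContinuousLinearMap.fst ℝ ℝ ℝ - (q / vT) • ContinuousLinearMap.snd ℝ ℝ ℝ).prod
          (ContinuousLinearMap.snd ℝ ℝ ℝ)
      exact hG.map L
    · rw [hY_def, covariance_fun_sub_left hG.fst.memLp_two (hG.snd.memLp_two.const_mul _)
        hG.snd.memLp_two, covariance_const_mul_left, hcov, covariance_self (by fun_prop), hvarT]
      field_simp
      ring
  have hsplit (g : ℝ → ℝ) (hg : Measurable g) :
      ∫ ω, exp (a * X ω) * g (T ω) ∂μ
        = (∫ ω, exp (a * Y ω) ∂μ) * ∫ x, exp (a * q / vT * x) * g x ∂(gaussianReal 0 vT.toNNReal)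
      := by
    rw [← hlawT, integral_map (by fun_prop) (by fun_prop),
      ← hindep.integral_fun_comp_mul_comp (f := fun y => exp (a * y))
        (g := fun x => exp (a * q / vT * x) * g x) (by fun_prop) (by fun_prop) (by fun_prop)
        (by fun_prop)]
    congr with ω
    rw [← mul_assoc, ← exp_add]
    congr 2
    simp only [hY_def]
    ring
  have hmgfX : ∫ ω, exp (a * X ω) ∂μ = exp (a ^ 2 * vX / 2) := by
    have := mgf_gaussianReal hlawX a
    rw [mgf] at this
    rw [this, Real.coe_toNNReal _ hvX]
    ring_nf
  have hmgfT : ∫ x, exp (a * q / vT * x) ∂(gaussianReal 0 vT.toNNReal)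
      = exp (vT.toNNReal * (a * q / vT) ^ 2 / 2) := by
    have := congrFun (mgf_fun_id_gaussianReal (μ := 0) (v := vT.toNNReal)) (a * q / vT)
    rw [mgf] at this
    rw [this, zero_mul, zero_add]
  have hfull := hsplit (fun _ => 1) measurable_const
  simp only [mul_one] at hfull
  rw [hsplit (fun x => if x ≤ u then 1 else 0)
    (Measurable.ite measurableSet_Iic measurable_const measurable_const),
    integral_exp_mul_indicator_gaussianReal hvT', ← mul_assoc, ← hmgfT, ← hfull, hmgfX,
    Real.coe_toNNReal _ hvT.le]
  congr 3
  field_simp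

end CenteredGaussianPair

/-- Suppose `ũ(T_t)` is `F_t`-measurable, and the Wiener integrals
`I_X = ∫_t^{t+Δ} e^{-κ_X(t+Δ-v)} dW_v`, `I_T = ∫_t^{t+Δ} e^{-κ_T(t+Δ-v)} dW_v`
are independent of `F_t`. Then
`E[e^{λσ_T I_X} 1_{I_T ≤ ũ} | F_t] = e^{λ²σ_T² kX²/2} Φ(ũ/k_T - λσ_T kXT²/k_T)`,
where `kX² = (1-e^{-2κ_XΔ})/(2κ_X)`, `kT² = (1-e^{-2κ_TΔ})/(2κ_T)` (`k_T = √(kT²)`),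
`kXT² = (1-e^{-(κ_X+κ_T)Δ})/(κ_X+κ_T)`.

The joint Gaussian law of `(I_X, I_T)` is encoded by the hypothesis `hGauss` (all linear
combinations are centered Gaussian with the covariance structure given by the Wiener
isometry), and independence of the pair from `F_t` is `hindep`. -/
theorem stmt_16 {Ω : Type*} [mΩ : MeasurableSpace Ω] (μ : Measure Ω) [IsProbabilityMeasure μ]
    (κX κT t Δ lam σT : ℝ) (hκX : 0 < κX) (hκT : 0 < κT) (hΔ : 0 < Δ) (ht : 0 ≤ t)
    (IX IT : Ω → ℝ) (hIX : Measurable IX) (hIT : Measurable IT)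
    (hGauss : ∀ c d : ℝ,
      Measure.map (fun ω => c * IX ω + d * IT ω) μ
        = gaussianReal 0 (Real.toNNReal
            (c ^ 2 * ((1 - Real.exp (-2 * κX * Δ)) / (2 * κX))
              + 2 * c * d * ((1 - Real.exp (-(κX + κT) * Δ)) / (κX + κT))
              + d ^ 2 * ((1 - Real.exp (-2 * κT * Δ)) / (2 * κT)))))
    (F : MeasurableSpace Ω) (hF : F ≤ mΩ)
    (U : Ω → ℝ) (hU : Measurable[F] U)
    (hindep : Indep (MeasurableSpace.comap (fun ω => (IX ω, IT ω)) inferInstance) F μ) :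
    (μ[fun ω => Real.exp (lam * σT * IX ω) * (if IT ω ≤ U ω then (1 : ℝ) else 0) | F])
      =ᵐ[μ] fun ω =>
        Real.exp (lam ^ 2 * σT ^ 2 * ((1 - Real.exp (-2 * κX * Δ)) / (2 * κX)) / 2)
          * stdNormalCDF
              (U ω / Real.sqrt ((1 - Real.exp (-2 * κT * Δ)) / (2 * κT))
                - lam * σT * ((1 - Real.exp (-(κX + κT) * Δ)) / (κX + κT))
                  / Real.sqrt ((1 - Real.exp (-2 * κT * Δ)) / (2 * κT))) := by
  have hvar (κ : ℝ) (hκ : 0 < κ) : 0 < 1 - exp (-κ * Δ) := by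
    rw [sub_pos, exp_lt_one_iff]
    nlinarith
  have hvX : 0 < (1 - exp (-2 * κX * Δ)) / (2 * κX) :=
    div_pos (by simpa using hvar (2 * κX) (by positivity)) (by positivity)
  have hvT : 0 < (1 - exp (-2 * κT * Δ)) / (2 * κT) :=
    div_pos (by simpa using hvar (2 * κT) (by positivity)) (by positivity)
  have hq : 0 < (1 - exp (-(κX + κT) * Δ)) / (κX + κT) :=
    div_pos (hvar (κX + κT) (by positivity)) (by positivity)
  have hZ : Measurable[mΩ] fun ω => (IX ω, IT ω) := hIX.prodMk hIT
  have hXZ : @IndepFun _ _ _ mΩ F _ (id : Ω → Ω) (fun ω => (IX ω, IT ω)) μ := by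
    rw [IndepFun_iff_Indep, MeasurableSpace.comap_id]
    exact hindep.symm
  have hf : StronglyMeasurable[F.prod inferInstance] fun p : Ω × (ℝ × ℝ) =>
      exp (lam * σT * p.2.1) * (if p.2.2 ≤ U p.1 then (1 : ℝ) else 0) := by
    have hU' : Measurable[F.prod inferInstance] fun p : Ω × (ℝ × ℝ) => U p.1 :=
      hU.comp measurable_fst
    have h2 : Measurable[F.prod inferInstance] fun p : Ω × (ℝ × ℝ) => p.2 := measurable_snd
    exact (((measurable_fst.comp h2).const_mul _).exp.mul
      (Measurable.ite (measurableSet_le (measurable_snd.comp h2) hU')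
        measurable_const measurable_const)).stronglyMeasurable
  have hlawX := hGauss 1 0
  simp only [one_mul, zero_mul, add_zero] at hlawX
  have hexp_int : Integrable (fun ω => exp (lam * σT * IX ω)) μ := by
    refine Integrable.comp_measurable (f := IX) (g := fun x => exp (lam * σT * x)) ?_ hIX
    rw [hlawX]
    exact integrable_exp_mul_gaussianReal _
  have hf_int : Integrable (fun ω => exp (lam * σT * IX ω) * (if IT ω ≤ U ω then (1 : ℝ) else 0))
      μ := by
    refine hexp_int.mono' ?_ ?_
    · have hUm : Measurable[mΩ] U := hU.mono hF le_rfl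
      exact ((hIX.const_mul _).exp.mul (Measurable.ite (measurableSet_le hIT hUm)
        measurable_const measurable_const)).aestronglyMeasurable
    · refine ae_of_all _ fun ω => ?_
      split_ifs <;> simp [exp_nonneg]
  have hcond := condExp_comap_ae_eq_integral_map_of_indepFun (mβ := F) (X := (id : Ω → Ω))
    (measurable_id'' hF) hZ hXZ hf hf_int
  rw [MeasurableSpace.comap_id] at hcond
  refine hcond.trans (ae_of_all _ fun ω => ?_)
  have hg : Measurable fun z : ℝ × ℝ =>
      exp (lam * σT * z.1) * (if z.2 ≤ U ω then (1 : ℝ) else 0) :=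
    (measurable_fst.const_mul _).exp.mul (Measurable.ite
      (measurableSet_le measurable_snd measurable_const) measurable_const measurable_const)
  simp only [id]
  rw [integral_map hZ.aemeasurable hg.aestronglyMeasurable,
    integral_exp_mul_indicator_of_map_linearCombination hIX hIT hvX.le hvT hq.le hGauss,
    mul_pow, sub_div (U ω)]
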